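/- Let N ≥ 1 and Λ ≥ 1, and let (u, v) be a classical solution of the system (P_Λ) (no sign or boundedness assumption on u, v). Then u(x)² + v(x)² ≤ 1 for every x ∈ ℝ^N. -/

import Mathlib

/-!
For `Λ ≥ 1` the function `z = u² + v² - 1` satisfies `Δ z ≥ 2 z²` where `z > 0`, so the bound is
an instance of the Keller–Osserman theorem: an entire function with `Δ z ≥ a z ^ q` where `z > 0`,
for some `a > 0` and `q > 1`, is nowhere positive.

To see this on a ball of radius `R` about `x₀`, put `w = R² - |x - x₀|²` and `m = 2 / (q - 1)`.
The multiple `M w ^ (-m)` of the boundary blow-up function, with `M` the maximum of `w ^ m z`,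
touches `z` from above at an interior point, where the comparison of Laplacians bounds `M`: this is
where `m (q - 1) = 2` enters. The outcome `a R² z(x₀) ^ (q - 1) ≤ C(n, q)` leaves no room for
`z(x₀) > 0` as `R → ∞`.
-/

open scoped RealInnerProductSpace
open Filter

noncomputable section

/-- The Laplacian of `f : ℝ^N → ℝ`, as the sum of the pure second partial
derivatives in the coordinate directions. -/
def lap (N : ℕ) (f : EuclideanSpace ℝ (Fin N) → ℝ) (x : EuclideanSpace ℝ (Fin N)) : ℝ :=
  ∑ i : Fin N,
    fderiv ℝ (fun y => fderiv ℝ f y (EuclideanSpace.single i 1)) x (EuclideanSpace.single i 1)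

/-- `(u, v)` is a classical solution of the system `(P_Λ)` on `ℝ^N`:
`u, v` are `C²` and `-Δu = u - u³ - Λ u v²`, `-Δv = v - v³ - Λ u² v` pointwise. -/
def IsSolution (N : ℕ) (Λ : ℝ) (u v : EuclideanSpace ℝ (Fin N) → ℝ) : Prop :=
  ContDiff ℝ 2 u ∧ ContDiff ℝ 2 v ∧
  (∀ x, -lap N u x = u x - (u x) ^ 3 - Λ * u x * (v x) ^ 2) ∧
  (∀ x, -lap N v x = v x - (v x) ^ 3 - Λ * (u x) ^ 2 * v x)

/-- Condition `(h∞)`: `u → 1`, `v → 0` as `x_N → +∞` and `u → 0`, `v → 1` as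
`x_N → -∞`, uniformly with respect to `x' ∈ ℝ^{N-1}` (the dimension is `N + 1`). -/
def Hinf (N : ℕ) (u v : EuclideanSpace ℝ (Fin (N + 1)) → ℝ) : Prop :=
  (∀ ε : ℝ, 0 < ε → ∃ M : ℝ, ∀ x : EuclideanSpace ℝ (Fin (N + 1)),
    M ≤ x (Fin.last N) → |u x - 1| < ε ∧ |v x| < ε) ∧
  (∀ ε : ℝ, 0 < ε → ∃ M : ℝ, ∀ x : EuclideanSpace ℝ (Fin (N + 1)),
    x (Fin.last N) ≤ M → |u x| < ε ∧ |v x - 1| < ε)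

open InnerProductSpace Laplacian Metric Module Topology

section SecondDerivatives

variable {E : Type*} [NormedAddCommGroup E] [NormedSpace ℝ E] {f : E → ℝ} {x : E}

lemma iteratedDeriv_two_nonpos_of_isLocalMax {φ : ℝ → ℝ} {a : ℝ} (hφ : ContinuousAt φ a)
    (hmax : IsLocalMax φ a) : iteratedDeriv 2 φ a ≤ 0 := by
  rw [iteratedDeriv_succ, iteratedDeriv_one]
  by_contra! hpos
  have hmin : IsLocalMin φ a := isLocalMin_of_deriv_deriv_pos hpos hmax.deriv_eq_zero hφ
  have hconst : φ =ᶠ[𝓝 a] fun _ => φ a := by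
    filter_upwards [hmax, hmin] with t hle hge using le_antisymm hle hge
  simpa using hpos.trans_eq hconst.deriv.deriv_eq

lemma iteratedDeriv_two_comp_line (hf : ContDiffAt ℝ 2 f x) (v : E) :
    iteratedDeriv 2 (fun t : ℝ => f (x + t • v)) 0 = iteratedFDeriv ℝ 2 f x ![v, v] := by
  have hline : deriv (fun t : ℝ => x + t • v) = fun _ => v := by
    ext t
    simpa using (((hasDerivAt_id t).smul_const v).const_add x).deriv
  have hv : (fun _ => v : Fin 2 → E) = ![v, v] := by
    ext i
    fin_cases i <;> rfl
  have hcomp := iteratedDeriv_vcomp_two (g := f) (f := fun t : ℝ => x + t • v) (x := 0)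
    (by simpa using hf) (by fun_prop)
  simpa only [Function.comp_def, iteratedDeriv_succ, iteratedDeriv_zero, hline, hv, deriv_const,
    map_zero, add_zero, zero_smul] using hcomp

lemma iteratedFDeriv_two_nonpos_of_isLocalMax (hf : ContDiffAt ℝ 2 f x) (hmax : IsLocalMax f x)
    (v : E) : iteratedFDeriv ℝ 2 f x ![v, v] ≤ 0 := by
  have hline : ContinuousAt (fun t : ℝ => x + t • v) 0 := by fun_prop
  rw [← iteratedDeriv_two_comp_line hf v]
  refine iteratedDeriv_two_nonpos_of_isLocalMax ?_ ?_
  · exact ContinuousAt.comp (g := f) (by simpa using hf.continuousAt) hline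
  · exact IsLocalMax.comp_continuous (f := f) (by simpa using hmax) hline

lemma iteratedFDeriv_two_comp {φ : ℝ → ℝ} (hφ : ContDiffAt ℝ 2 φ (f x)) (hf : ContDiffAt ℝ 2 f x)
    (v : E) :
    iteratedFDeriv ℝ 2 (fun y => φ (f y)) x ![v, v] =
      iteratedDeriv 2 φ (f x) * fderiv ℝ f x v ^ 2 +
        deriv φ (f x) * iteratedFDeriv ℝ 2 f x ![v, v] := by
  have hline : ContDiffAt ℝ 2 (fun t : ℝ => f (x + t • v)) 0 :=
    ContDiffAt.comp (g := f) 0 (by simpa using hf) (by fun_prop)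
  have hderiv : deriv (fun t : ℝ => f (x + t • v)) 0 = fderiv ℝ f x v :=
    (hf.differentiableAt two_ne_zero).lineDeriv_eq_fderiv
  have hchain := iteratedDeriv_scomp_two (g := φ) (x := 0) (by simpa using hφ) hline
  rw [← iteratedDeriv_two_comp_line (f := fun y => φ (f y)) (hφ.comp x hf) v,
    ← iteratedDeriv_two_comp_line hf v, ← hderiv]
  simpa [Function.comp_def, mul_comm] using hchain

end SecondDerivatives

section Laplacian

variable {E : Type*} [NormedAddCommGroup E] [InnerProductSpace ℝ E]

lemma iteratedFDeriv_two_norm_sq (x v : E) :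
    iteratedFDeriv ℝ 2 (fun y : E => ‖y‖ ^ 2) x ![v, v] = 2 * ‖v‖ ^ 2 := by
  have hsecond : fderiv ℝ (fderiv ℝ fun y : E => ‖y‖ ^ 2) x = 2 • innerSL ℝ := by
    rw [fderiv_norm_sq]
    exact (2 • innerSL ℝ : E →L[ℝ] E →L[ℝ] ℝ).fderiv
  rw [iteratedFDeriv_two_apply, hsecond, ← real_inner_self_eq_norm_sq, two_mul, two_smul]
  rfl

variable [FiniteDimensional ℝ E] {f g : E → ℝ} {x : E}

lemma laplacian_nonpos_of_isLocalMax (hf : ContDiffAt ℝ 2 f x) (hmax : IsLocalMax f x) :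
    Δ f x ≤ 0 := by
  rw [laplacian_eq_iteratedFDeriv_stdOrthonormalBasis]
  exact Finset.sum_nonpos fun i _ => iteratedFDeriv_two_nonpos_of_isLocalMax hf hmax _

lemma laplacian_le_of_isLocalMax_sub (hf : ContDiffAt ℝ 2 f x) (hg : ContDiffAt ℝ 2 g x)
    (hmax : IsLocalMax (f - g) x) : Δ f x ≤ Δ g x := by
  rw [← sub_nonpos, ← hf.laplacian_sub hg]
  exact laplacian_nonpos_of_isLocalMax (hf.sub hg) hmax

lemma laplacian_comp {φ : ℝ → ℝ} (hφ : ContDiffAt ℝ 2 φ (f x)) (hf : ContDiffAt ℝ 2 f x) :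
    Δ (fun y => φ (f y)) x =
      iteratedDeriv 2 φ (f x) * ‖fderiv ℝ f x‖ ^ 2 + deriv φ (f x) * Δ f x := by
  simp only [laplacian_eq_iteratedFDeriv_stdOrthonormalBasis, iteratedFDeriv_two_comp hφ hf,
    (stdOrthonormalBasis ℝ E).norm_dual, Finset.sum_add_distrib, Finset.mul_sum]

lemma two_mul_mul_laplacian_le_laplacian_sq (hf : ContDiffAt ℝ 2 f x) :
    2 * f x * Δ f x ≤ Δ (fun y => f y ^ 2) x := by
  have hchain := laplacian_comp (φ := fun t => t ^ 2) (by fun_prop) hf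
  have hderiv : iteratedDeriv 2 (fun t : ℝ => t ^ 2) (f x) = 2 := by
    simp
  have hsq : Δ (fun y => f y ^ 2) x = 2 * ‖fderiv ℝ f x‖ ^ 2 + 2 * f x * Δ f x := by
    rw [hderiv] at hchain
    simpa using hchain
  linarith [sq_nonneg ‖fderiv ℝ f x‖]

lemma laplacian_norm_sub_sq (x₀ : E) : Δ (fun y => ‖y - x₀‖ ^ 2) x = 2 * finrank ℝ E := by
  simp [laplacian_eq_iteratedFDeriv_stdOrthonormalBasis,
    iteratedFDeriv_comp_sub (f := fun y : E => ‖y‖ ^ 2), iteratedFDeriv_two_norm_sq, mul_comm]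

end Laplacian

section BallWeight

variable {E : Type*} [NormedAddCommGroup E] {x₀ x : E} {R m : ℝ}

/-- The weight `R² - ‖x - x₀‖²` on the ball of centre `x₀` and radius `R`: it is positive inside and
vanishes on the sphere, so that its negative powers blow up at the boundary. -/
def ballWeight (x₀ : E) (R : ℝ) (x : E) : ℝ := R ^ 2 - ‖x - x₀‖ ^ 2

lemma ballWeight_center : ballWeight x₀ R x₀ = R ^ 2 := by
  simp [ballWeight]

lemma continuous_ballWeight : Continuous (ballWeight x₀ R) := by
  unfold ballWeight
  fun_prop

lemma ballWeight_pos (hx : x ∈ ball x₀ R) : 0 < ballWeight x₀ R x := by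
  rw [mem_ball_iff_norm] at hx
  exact sub_pos.2 (pow_lt_pow_left₀ hx (norm_nonneg _) two_ne_zero)

lemma exists_isLocalMax_sub_smul_ballWeight_rpow_neg [ProperSpace E] {z : E → ℝ}
    (hz : ContinuousOn z (closedBall x₀ R)) (hR : 0 < R) (hpos : 0 < z x₀) (hm : 0 < m) :
    ∃ p ∈ ball x₀ R, ∃ M, (R ^ 2) ^ m * z x₀ ≤ M ∧ z p = M * ballWeight x₀ R p ^ (-m) ∧
      IsLocalMax (z - M • fun y => ballWeight x₀ R y ^ (-m)) p := by
  let F : E → ℝ := fun y => ballWeight x₀ R y ^ m * z y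
  have hF : ContinuousOn F (closedBall x₀ R) :=
    (continuous_ballWeight.rpow_const fun _ => Or.inr hm.le).continuousOn.mul hz
  have hcenter : x₀ ∈ closedBall x₀ R := mem_closedBall_self hR.le
  obtain ⟨p, hp, hmax⟩ := (isCompact_closedBall x₀ R).exists_isMaxOn ⟨x₀, hcenter⟩ hF
  have hM : (R ^ 2) ^ m * z x₀ ≤ F p := by
    simpa only [F, ballWeight_center] using isMaxOn_iff.1 hmax x₀ hcenter
  have hFp : 0 < F p := lt_of_lt_of_le (by positivity) hM
  have hball : p ∈ ball x₀ R := by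
    refine mem_ball.2 (lt_of_le_of_ne hp fun hsphere => hFp.ne' ?_)
    rw [dist_eq_norm] at hsphere
    simp [F, ballWeight, hsphere, hm.ne']
  have hz_eq : ∀ y ∈ ball x₀ R, z y = F y * ballWeight x₀ R y ^ (-m) := fun y hy => by
    have hw : 0 < ballWeight x₀ R y ^ m := Real.rpow_pos_of_pos (ballWeight_pos hy) m
    rw [Real.rpow_neg (ballWeight_pos hy).le, mul_right_comm, mul_inv_cancel₀ hw.ne', one_mul]
  refine ⟨p, hball, F p, hM, hz_eq p hball, ?_⟩
  filter_upwards [isOpen_ball.mem_nhds hball] with y hy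
  have hle : z y ≤ F p * ballWeight x₀ R y ^ (-m) := by
    rw [hz_eq y hy]
    exact mul_le_mul_of_nonneg_right (hmax (ball_subset_closedBall hy))
      (Real.rpow_nonneg (ballWeight_pos hy).le _)
  simpa [← hz_eq p hball] using hle

variable [InnerProductSpace ℝ E]

lemma contDiff_ballWeight : ContDiff ℝ 2 (ballWeight x₀ R) :=
  contDiff_const.sub ((contDiff_id.sub contDiff_const).norm_sq ℝ)

lemma contDiffAt_ballWeight_rpow (hx : x ∈ ball x₀ R) :
    ContDiffAt ℝ 2 (fun y => ballWeight x₀ R y ^ m) x :=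
  contDiff_ballWeight.contDiffAt.rpow_const_of_ne (ballWeight_pos hx).ne'

lemma norm_fderiv_ballWeight : ‖fderiv ℝ (ballWeight x₀ R) x‖ = 2 * ‖x - x₀‖ := by
  have hfderiv : fderiv ℝ (ballWeight x₀ R) x = -(2 • innerSL ℝ (x - x₀)) := by
    unfold ballWeight
    rw [fderiv_const_sub, fderiv_comp_sub (f := fun y : E => ‖y‖ ^ 2), fderiv_norm_sq_apply]
  rw [hfderiv, norm_neg, ← Nat.cast_smul_eq_nsmul ℝ, norm_smul, innerSL_apply_norm]
  simp

variable [FiniteDimensional ℝ E]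

lemma laplacian_ballWeight : Δ (ballWeight x₀ R) x = -(2 * finrank ℝ E) := by
  have hnorm : ContDiffAt ℝ 2 (fun y => ‖y - x₀‖ ^ 2) x :=
    (contDiffAt_id.sub contDiffAt_const).norm_sq ℝ
  have hsub := ContDiffAt.laplacian_sub (f₁ := fun _ : E => R ^ 2) contDiffAt_const hnorm
  rwa [laplacian_const, laplacian_norm_sub_sq, Pi.zero_apply, zero_sub] at hsub

lemma laplacian_ballWeight_rpow_neg_le (hm : 0 ≤ m) (hx : x ∈ ball x₀ R) :
    Δ (fun y => ballWeight x₀ R y ^ (-m)) x ≤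
      2 * m * (2 * m + 2 + finrank ℝ E) * R ^ 2 * ballWeight x₀ R x ^ (-m - 2) := by
  set w := ballWeight x₀ R x with hw_def
  have hw : 0 < w := ballWeight_pos hx
  have hw_le : w ≤ R ^ 2 := sub_le_self _ (sq_nonneg _)
  have hnorm : ‖x - x₀‖ ^ 2 = R ^ 2 - w := (sub_sub_cancel _ _).symm
  have hpow : w ^ (-m - 1) = w ^ (-m - 2) * w := by
    rw [← Real.rpow_add_one hw.ne']
    ring_nf
  have hderiv : iteratedDeriv 2 (fun t : ℝ => t ^ (-m)) w = m * (m + 1) * w ^ (-m - 2) := by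
    simp only [iteratedDeriv_succ, iteratedDeriv_zero, Real.deriv_rpow_const',
      deriv_const_mul_field]
    ring_nf
  have hslack : 0 ≤ w ^ (-m - 2) * (m * (4 * (m + 1) * w + 2 * finrank ℝ E * (R ^ 2 - w))) := by
    have := sub_nonneg.2 hw_le
    positivity
  rw [laplacian_comp (f := ballWeight x₀ R) (φ := fun t => t ^ (-m))
    (Real.contDiffAt_rpow_const_of_ne hw.ne') contDiff_ballWeight.contDiffAt, ← hw_def, hderiv,
    norm_fderiv_ballWeight, laplacian_ballWeight, Real.deriv_rpow_const, hpow, mul_pow, hnorm]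
  linarith

end BallWeight

section KellerOsserman

variable {E : Type*} [NormedAddCommGroup E] [InnerProductSpace ℝ E] [FiniteDimensional ℝ E]
  {z : E → ℝ} {a q : ℝ}

lemma mul_rpow_le_of_isLocalMax_sub_smul_ballWeight_rpow_neg {x₀ p : E} {R m M : ℝ}
    (hm : 0 ≤ m) (hmq : m * (q - 1) = 2) (hM : 0 < M) (hp : p ∈ ball x₀ R)
    (hz : ContDiffAt ℝ 2 z p) (hΔ : a * z p ^ q ≤ Δ z p)
    (htouch : z p = M * ballWeight x₀ R p ^ (-m))
    (hmax : IsLocalMax (z - M • fun y => ballWeight x₀ R y ^ (-m)) p) :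
    a * M ^ (q - 1) ≤ 2 * m * (2 * m + 2 + finrank ℝ E) * R ^ 2 := by
  have hw : 0 < ballWeight x₀ R p := ballWeight_pos hp
  have hb : ContDiffAt ℝ 2 (fun y => ballWeight x₀ R y ^ (-m)) p := contDiffAt_ballWeight_rpow hp
  have hpow : z p ^ q = M ^ (q - 1) * (M * ballWeight x₀ R p ^ (-m - 2)) := by
    rw [htouch, Real.mul_rpow hM.le (Real.rpow_nonneg hw.le _), ← Real.rpow_mul hw.le,
      show -m * q = -m - 2 by linear_combination -hmq, ← mul_assoc, ← Real.rpow_add_one hM.ne',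
      sub_add_cancel]
  have hscale : 0 < M * ballWeight x₀ R p ^ (-m - 2) := mul_pos hM (Real.rpow_pos_of_pos hw _)
  refine le_of_mul_le_mul_right ?_ hscale
  calc
    a * M ^ (q - 1) * (M * ballWeight x₀ R p ^ (-m - 2)) = a * z p ^ q := by rw [hpow, mul_assoc]
    _ ≤ Δ z p := hΔ
    _ ≤ Δ (M • fun y => ballWeight x₀ R y ^ (-m)) p :=
      laplacian_le_of_isLocalMax_sub hz (hb.const_smul M) hmax
    _ = M * Δ (fun y => ballWeight x₀ R y ^ (-m)) p := laplacian_smul M hb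
    _ ≤ M * (2 * m * (2 * m + 2 + finrank ℝ E) * R ^ 2 * ballWeight x₀ R p ^ (-m - 2)) :=
      mul_le_mul_of_nonneg_left (laplacian_ballWeight_rpow_neg_le hm hp) hM.le
    _ = 2 * m * (2 * m + 2 + finrank ℝ E) * R ^ 2 * (M * ballWeight x₀ R p ^ (-m - 2)) := by ring

theorem mul_sq_mul_rpow_le_of_mul_rpow_le_laplacian {x₀ : E} {R : ℝ} (ha : 0 ≤ a) (hq : 1 < q)
    (hR : 0 < R) (hcont : ContinuousOn z (closedBall x₀ R))
    (hz : ∀ x ∈ ball x₀ R, ContDiffAt ℝ 2 z x)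
    (hΔ : ∀ x ∈ ball x₀ R, 0 < z x → a * z x ^ q ≤ Δ z x) (hpos : 0 < z x₀) :
    a * R ^ 2 * z x₀ ^ (q - 1) ≤ 4 / (q - 1) * (4 / (q - 1) + 2 + finrank ℝ E) := by
  have hq' : 0 < q - 1 := sub_pos.2 hq
  obtain ⟨m, hm, hmq⟩ : ∃ m : ℝ, 0 < m ∧ m * (q - 1) = 2 :=
    ⟨2 / (q - 1), by positivity, div_mul_cancel₀ 2 hq'.ne'⟩
  have hconst : 4 / (q - 1) = 2 * m := by
    rw [div_eq_iff hq'.ne']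
    linear_combination -2 * hmq
  obtain ⟨p, hp, M, hM, htouch, hmax⟩ :=
    exists_isLocalMax_sub_smul_ballWeight_rpow_neg hcont hR hpos hm
  have hM_pos : 0 < M := lt_of_lt_of_le (by positivity) hM
  have hzp : 0 < z p := by
    rw [htouch]
    exact mul_pos hM_pos (Real.rpow_pos_of_pos (ballWeight_pos hp) _)
  have hM_pow : (R ^ 2) ^ 2 * z x₀ ^ (q - 1) ≤ M ^ (q - 1) := by
    have h := Real.rpow_le_rpow (by positivity) hM hq'.le
    rwa [Real.mul_rpow (by positivity) hpos.le, ← Real.rpow_mul (by positivity), hmq,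
      Real.rpow_two] at h
  rw [hconst]
  refine le_of_mul_le_mul_right ?_ (pow_pos hR 2)
  calc
    a * R ^ 2 * z x₀ ^ (q - 1) * R ^ 2 = a * ((R ^ 2) ^ 2 * z x₀ ^ (q - 1)) := by ring
    _ ≤ a * M ^ (q - 1) := mul_le_mul_of_nonneg_left hM_pow ha
    _ ≤ 2 * m * (2 * m + 2 + finrank ℝ E) * R ^ 2 :=
      mul_rpow_le_of_isLocalMax_sub_smul_ballWeight_rpow_neg hm.le hmq hM_pos hp (hz p hp)
        (hΔ p hp hzp) htouch hmax

theorem nonpos_of_mul_rpow_le_laplacian (ha : 0 < a) (hq : 1 < q) (hz : ContDiff ℝ 2 z)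
    (hΔ : ∀ x, 0 < z x → a * z x ^ q ≤ Δ z x) (x : E) : z x ≤ 0 := by
  by_contra! hpos
  have hcoeff : 0 < a * z x ^ (q - 1) := mul_pos ha (Real.rpow_pos_of_pos hpos _)
  have hunbounded : Tendsto (fun R : ℝ => a * z x ^ (q - 1) * R ^ 2) atTop atTop :=
    (tendsto_pow_atTop two_ne_zero).const_mul_atTop hcoeff
  obtain ⟨R, hlarge, hR⟩ := ((hunbounded.eventually_gt_atTop
    (4 / (q - 1) * (4 / (q - 1) + 2 + finrank ℝ E))).and (eventually_gt_atTop 0)).exists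
  have hle := mul_sq_mul_rpow_le_of_mul_rpow_le_laplacian (x₀ := x) ha.le hq hR
    hz.continuous.continuousOn (fun y _ => hz.contDiffAt) (fun y _ => hΔ y) hpos
  rw [mul_right_comm] at hle
  exact hle.not_gt hlarge

end KellerOsserman

section System

variable {n : ℕ} {Λ : ℝ} {u v : EuclideanSpace ℝ (Fin n) → ℝ}

lemma lap_eq_laplacian (hu : ContDiff ℝ 2 u) (x : EuclideanSpace ℝ (Fin n)) :
    lap n u x = Δ u x := by
  have hfderiv : DifferentiableAt ℝ (fderiv ℝ u) x :=
    (hu.fderiv_right (m := 1) le_rfl).differentiable one_ne_zero x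
  simp [lap, laplacian_eq_iteratedFDeriv_orthonormalBasis u (EuclideanSpace.basisFun (Fin n) ℝ),
    iteratedFDeriv_two_apply, fderiv_clm_apply hfderiv (differentiableAt_const _)]

lemma IsSolution.two_mul_sq_le_laplacian (hsol : IsSolution n Λ u v) (hΛ : 1 ≤ Λ)
    (x : EuclideanSpace ℝ (Fin n)) (hnonneg : 0 ≤ u x ^ 2 + v x ^ 2 - 1) :
    2 * (u x ^ 2 + v x ^ 2 - 1) ^ 2 ≤ Δ (fun y => (u y ^ 2 + v y ^ 2 - 1 : ℝ)) x := by
  obtain ⟨hu, hv, hlap_u, hlap_v⟩ := hsol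
  have hu' : ContDiffAt ℝ 2 (fun y => u y ^ 2) x := (hu.pow 2).contDiffAt
  have hv' : ContDiffAt ℝ 2 (fun y => v y ^ 2) x := (hv.pow 2).contDiffAt
  have hsum : Δ (fun y => (u y ^ 2 + v y ^ 2 - 1 : ℝ)) x =
      Δ (fun y => u y ^ 2) x + Δ (fun y => v y ^ 2) x := by
    have hsub := (hu'.add hv').laplacian_sub (f₂ := fun _ => (1 : ℝ)) contDiffAt_const
    rw [laplacian_const, Pi.zero_apply, sub_zero] at hsub
    exact hsub.trans (hu'.laplacian_add hv')
  have hcoupling : 0 ≤ (Λ - 1) * (u x ^ 2 * v x ^ 2) :=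
    mul_nonneg (sub_nonneg.2 hΛ) (by positivity)
  have hΔu : Δ u x = -(u x - u x ^ 3 - Λ * u x * v x ^ 2) := by
    rw [← hlap_u, neg_neg, lap_eq_laplacian hu]
  have hΔv : Δ v x = -(v x - v x ^ 3 - Λ * u x ^ 2 * v x) := by
    rw [← hlap_v, neg_neg, lap_eq_laplacian hv]
  calc
    2 * (u x ^ 2 + v x ^ 2 - 1) ^ 2
      ≤ 2 * (u x ^ 2 + v x ^ 2 - 1) ^ 2 + 2 * (u x ^ 2 + v x ^ 2 - 1)
          + 4 * ((Λ - 1) * (u x ^ 2 * v x ^ 2)) := by linarith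
    _ = 2 * u x * Δ u x + 2 * v x * Δ v x := by
      rw [hΔu, hΔv]
      ring
    _ ≤ Δ (fun y => u y ^ 2) x + Δ (fun y => v y ^ 2) x :=
      add_le_add (two_mul_mul_laplacian_le_laplacian_sq hu.contDiffAt)
        (two_mul_mul_laplacian_le_laplacian_sq hv.contDiffAt)
    _ = Δ (fun y => (u y ^ 2 + v y ^ 2 - 1 : ℝ)) x := hsum.symm

end System

/-- Theorem 1.3 (ii): universal bound `u² + v² ≤ 1` for `Λ ≥ 1`. -/
theorem stmt_3 (N : ℕ) (Λ : ℝ) (hΛ : 1 ≤ Λ)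
    (u v : EuclideanSpace ℝ (Fin (N + 1)) → ℝ)
    (hsol : IsSolution (N + 1) Λ u v) :
    ∀ x, (u x) ^ 2 + (v x) ^ 2 ≤ 1 := by
  let z := fun x => u x ^ 2 + v x ^ 2 - 1
  have hz : ContDiff ℝ 2 z := ((hsol.1.pow 2).add (hsol.2.1.pow 2)).sub contDiff_const
  have hΔ : ∀ x, 0 < z x → 2 * z x ^ (2 : ℝ) ≤ Δ z x := fun x hpos => by
    rw [Real.rpow_two]
    exact hsol.two_mul_sq_le_laplacian hΛ x hpos.le
  exact fun x => sub_nonpos.1 (nonpos_of_mul_rpow_le_laplacian two_pos one_lt_two hz hΔ x)
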